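/- arXiv:1810.11648 — 7 statements merged into one kernel-verified Lean document; each statement's English description precedes it below -/
import Mathlib

section
/- Every local (classical) (2,2,2) box that satisfies the three Hardy zero constraints P(0,1|0,1) = 0, P(1,0|1,0) = 0 and P(0,0|1,1) = 0 also satisfies P(0,0|0,0) = 0. -/
/-- A (2,2,2) box is local (classical) if it is a finite convex combination of
deterministic boxes. -/
def IsLocalBox (P : Fin 2 → Fin 2 → Fin 2 → Fin 2 → ℝ) : Prop :=
  ∃ (Λ : Type) (s : Finset Λ) (q : Λ → ℝ) (f g : Λ → Fin 2 → Fin 2),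
    (∀ l ∈ s, 0 ≤ q l) ∧ (∑ l ∈ s, q l = 1) ∧
    ∀ a b x y, P a b x y =
      ∑ l ∈ s, q l * (if a = f l x then 1 else 0) * (if b = g l y then 1 else 0)

section Hardy

variable {α β X Y R : Type*} [DecidableEq α] [DecidableEq β]

/-- Locality of a correlation `P(a,b|x,y)` with arbitrary sets `X`, `Y` of settings and `α`, `β` of
outcomes, and with values in an ordered semiring: `P` is a finite convex combination of
deterministic correlations. As only the finite set `s` of hidden variables matters, it is no
restriction to take `Λ` in the lowest universe. -/
def IsLocalCorrelation [Semiring R] [PartialOrder R] (P : α → β → X → Y → R) : Prop :=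
  ∃ (Λ : Type) (s : Finset Λ) (q : Λ → R) (f : Λ → X → α) (g : Λ → Y → β),
    (∀ l ∈ s, 0 ≤ q l) ∧ (∑ l ∈ s, q l = 1) ∧
    ∀ a b x y, P a b x y =
      ∑ l ∈ s, q l * (if a = f l x then 1 else 0) * (if b = g l y then 1 else 0)

theorem isLocalBox_iff_isLocalCorrelation {P : Fin 2 → Fin 2 → Fin 2 → Fin 2 → ℝ} :
    IsLocalBox P ↔ IsLocalCorrelation P :=
  Iff.rfl

variable [Semiring R] [PartialOrder R] [IsOrderedAddMonoid R] {P : α → β → X → Y → R}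

theorem IsLocalCorrelation.exists_strategies_ne_zero_iff (hP : IsLocalCorrelation P) :
    ∃ S : Set ((X → α) × (Y → β)),
      ∀ a b x y, P a b x y ≠ 0 ↔ ∃ σ ∈ S, σ.1 x = a ∧ σ.2 y = b := by
  obtain ⟨Λ, s, q, f, g, hq, -, hsum⟩ := hP
  refine ⟨(fun l ↦ (f l, g l)) '' {l ∈ s | q l ≠ 0}, fun a b x y ↦ ?_⟩
  have hsum_filter : P a b x y = ∑ l ∈ s with f l x = a ∧ g l y = b, q l := by
    simp only [hsum, Finset.sum_filter, mul_ite, mul_one, mul_zero, ← ite_and, and_comm, eq_comm]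
  have hq_filter : ∀ l ∈ s.filter (fun l ↦ f l x = a ∧ g l y = b), 0 ≤ q l :=
    fun l hl ↦ hq l (Finset.mem_of_mem_filter l hl)
  rw [hsum_filter, Ne, Finset.sum_eq_zero_iff_of_nonneg hq_filter]
  simp only [Finset.mem_filter, Set.exists_mem_image, Set.mem_ofPred_eq]
  grind

theorem local_box_hardy_zero_general (hP : IsLocalCorrelation P) {a a' : α} {b b' : β}
    {x x' : X} {y y' : Y} (hb' : ∀ c ≠ b', P a c x y' = 0) (ha' : ∀ c ≠ a', P c b x' y = 0)
    (hab' : P a' b' x' y' = 0) :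
    P a b x y = 0 := by
  obtain ⟨S, hS⟩ := hP.exists_strategies_ne_zero_iff
  by_contra hab
  obtain ⟨σ, hσ, hσx, hσy⟩ := (hS a b x y).mp hab
  have hσy' : σ.2 y' = b' :=
    not_imp_comm.mp (hb' (σ.2 y')) ((hS a _ x y').mpr ⟨σ, hσ, hσx, rfl⟩)
  have hσx' : σ.1 x' = a' :=
    not_imp_comm.mp (ha' (σ.1 x')) ((hS _ b x' y).mpr ⟨σ, hσ, rfl, hσy⟩)
  exact (hS a' b' x' y').mpr ⟨σ, hσ, hσx', hσy'⟩ hab'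

end Hardy

/-- Every local (2,2,2) box satisfying the three Hardy zero constraints also has
`P(0,0|0,0) = 0`. -/
theorem local_box_hardy_zero (P : Fin 2 → Fin 2 → Fin 2 → Fin 2 → ℝ)
    (hpos : ∀ a b x y, 0 ≤ P a b x y)
    (hnorm : ∀ x y, ∑ a, ∑ b, P a b x y = 1)
    (hloc : IsLocalBox P)
    (h1 : P 0 1 0 1 = 0) (h2 : P 1 0 1 0 = 0) (h3 : P 0 0 1 1 = 0) :
    P 0 0 0 0 = 0 := by
  exact local_box_hardy_zero_general (isLocalBox_iff_isLocalCorrelation.mp hloc)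
    (by simpa [Fin.forall_fin_two] using h1) (by simpa [Fin.forall_fin_two] using h2) h3
end

section
/- For 0 < θ < π/2 let |ψ_θ⟩ = (1/√(1+cos²θ))·(cosθ(|0⟩⊗|1⟩ + |1⟩⊗|0⟩) + sinθ|1⟩⊗|1⟩) ∈ ℂ²⊗ℂ², and define measurement vectors v_{1,0} = |0⟩, v_{1,1} = |1⟩, v_{0,0} = sinθ|0⟩ − cosθ|1⟩, v_{0,1} = cosθ|0⟩ + sinθ|1⟩. Then the (2,2,2) box P(a,b|x,y) = |⟨v_{x,a}⊗v_{y,b}, ψ_θ⟩|² satisfies P(0,1|0,1) = 0, P(1,0|1,0) = 0, P(0,0|1,1) = 0, and P(0,0|0,0) = sin²θ·cos⁴θ/(1+cos²θ) > 0. In particular, when cos²θ = (√5−1)/2, one has P(0,0|0,0) = (5√5−11)/2. -/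
/-!
Up to the factor `1 / √(1 + cos² θ)`, the Hardy state is
`cos θ |0⟩ ⊗ |1⟩ + |1⟩ ⊗ v_{0,1}`: once one party finds `|1⟩`, the other holds `v_{0,1}`.
Orthogonality within each measurement basis, together with the symmetry of the state, then kills
the amplitudes of the three excluded events, while for `v_{0,0} ⊗ v_{0,0}` only the first term
survives, with amplitude `cos θ · sin θ · (-cos θ)`.
At `g = cos² θ = (√5 - 1) / 2` the relation `g² = 1 - g` gives `P(0,0|0,0) = g⁵ = 5 g - 3`.
-/

noncomputable section

/-- The standard basis vector `|0⟩` of `ℂ²`. -/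
def ket0 : EuclideanSpace ℂ (Fin 2) := WithLp.toLp 2 (fun i => if i = 0 then 1 else 0)

/-- The standard basis vector `|1⟩` of `ℂ²`. -/
def ket1 : EuclideanSpace ℂ (Fin 2) := WithLp.toLp 2 (fun i => if i = 1 then 1 else 0)

/-- The tensor product of two vectors of `ℂ²`, realized in `ℂ² ⊗ ℂ² ≅ ℂ⁴`. -/
def tens (v w : EuclideanSpace ℂ (Fin 2)) : EuclideanSpace ℂ (Fin 2 × Fin 2) :=
  WithLp.toLp 2 (fun p => v p.1 * w p.2)

/-- The Hardy state `|ψ_θ⟩`. -/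
def hardyState (θ : ℝ) : EuclideanSpace ℂ (Fin 2 × Fin 2) :=
  ((1 / Real.sqrt (1 + Real.cos θ ^ 2) : ℝ) : ℂ) •
    (((Real.cos θ : ℂ)) • (tens ket0 ket1 + tens ket1 ket0) +
      ((Real.sin θ : ℂ)) • tens ket1 ket1)

/-- The measurement vectors `v_{x,a}`. -/
def mvec (θ : ℝ) (x a : Fin 2) : EuclideanSpace ℂ (Fin 2) :=
  if x = 1 then (if a = 0 then ket0 else ket1)
  else
    (if a = 0 then (Real.sin θ : ℂ) • ket0 - (Real.cos θ : ℂ) • ket1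
     else (Real.cos θ : ℂ) • ket0 + (Real.sin θ : ℂ) • ket1)

/-- The quantum (2,2,2) box `P(a,b|x,y) = |⟨v_{x,a} ⊗ v_{y,b}, ψ_θ⟩|²`. -/
def hardyBox (θ : ℝ) (a b x y : Fin 2) : ℝ :=
  ‖(inner ℂ (tens (mvec θ x a) (mvec θ y b)) (hardyState θ) : ℂ)‖ ^ 2

section

open scoped InnerProductSpace

theorem pow_five_of_sq_eq_one_sub {R : Type*} [CommRing R] {g : R} (h : g ^ 2 = 1 - g) :
    g ^ 5 = 5 * g - 3 := by
  linear_combination (g ^ 3 - g ^ 2 + 2 * g - 3) * h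

theorem sqrt_five_sub_one_div_two_sq : ((√5 - 1) / 2) ^ 2 = 1 - (√5 - 1) / 2 := by
  linear_combination (1 / 4 : ℝ) * Real.sq_sqrt (show (0 : ℝ) ≤ 5 by norm_num)

theorem inner_tens_tens (v w v' w' : EuclideanSpace ℂ (Fin 2)) :
    ⟪tens v w, tens v' w'⟫_ℂ = ⟪v, v'⟫_ℂ * ⟪w, w'⟫_ℂ := by
  simp only [tens, PiLp.inner_apply, RCLike.inner_apply, Fintype.sum_prod_type,
    Finset.sum_mul_sum, map_mul]
  exact Finset.sum_congr rfl fun i _ => Finset.sum_congr rfl fun j _ => by ring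

theorem inner_ket0_right (v : EuclideanSpace ℂ (Fin 2)) : ⟪v, ket0⟫_ℂ = star (v 0) := by
  simp [ket0, PiLp.inner_apply]

theorem inner_ket1_right (v : EuclideanSpace ℂ (Fin 2)) : ⟪v, ket1⟫_ℂ = star (v 1) := by
  simp [ket1, PiLp.inner_apply]

variable (θ : ℝ)

theorem mvec_one_zero : mvec θ 1 0 = ket0 := rfl

theorem mvec_one_one : mvec θ 1 1 = ket1 := rfl

theorem mvec_zero_zero :
    mvec θ 0 0 = (Real.sin θ : ℂ) • ket0 - (Real.cos θ : ℂ) • ket1 := rfl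

theorem mvec_zero_one :
    mvec θ 0 1 = (Real.cos θ : ℂ) • ket0 + (Real.sin θ : ℂ) • ket1 := rfl

theorem inner_mvec_zero_zero_ket0 : ⟪mvec θ 0 0, ket0⟫_ℂ = Real.sin θ := by
  rw [inner_ket0_right]
  simp [mvec_zero_zero, ket0, ket1, -Complex.ofReal_sin]

theorem inner_mvec_zero_zero_ket1 : ⟪mvec θ 0 0, ket1⟫_ℂ = -Real.cos θ := by
  rw [inner_ket1_right]
  simp [mvec_zero_zero, ket0, ket1, -Complex.ofReal_cos]

theorem inner_mvec_zero_mvec_one (x : Fin 2) : ⟪mvec θ x 0, mvec θ x 1⟫_ℂ = 0 := by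
  match x with
  | 0 =>
    rw [mvec_zero_one, inner_add_right, inner_smul_right, inner_smul_right,
      inner_mvec_zero_zero_ket0, inner_mvec_zero_zero_ket1]
    ring
  | 1 => simp [mvec_one_zero, mvec_one_one, inner_ket1_right, ket0]

theorem inner_ket0_ket1 : ⟪ket0, ket1⟫_ℂ = 0 := inner_mvec_zero_mvec_one 0 1

theorem inner_tens_hardyState (v w : EuclideanSpace ℂ (Fin 2)) :
    ⟪tens v w, hardyState θ⟫_ℂ = ((1 / √(1 + Real.cos θ ^ 2) : ℝ) : ℂ) *
      (Real.cos θ * (⟪v, ket0⟫_ℂ * ⟪w, ket1⟫_ℂ) + ⟪v, ket1⟫_ℂ * ⟪w, mvec θ 0 1⟫_ℂ) := by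
  simp only [hardyState, mvec_zero_one, inner_smul_right, inner_add_right, inner_tens_tens]
  ring

theorem inner_tens_hardyState_comm (v w : EuclideanSpace ℂ (Fin 2)) :
    ⟪tens v w, hardyState θ⟫_ℂ = ⟪tens w v, hardyState θ⟫_ℂ := by
  simp only [inner_tens_hardyState, mvec_zero_one, inner_add_right, inner_smul_right]
  ring

theorem hardyBox_swap (a b x y : Fin 2) : hardyBox θ a b x y = hardyBox θ b a y x := by
  rw [hardyBox, inner_tens_hardyState_comm, hardyBox]

theorem hardyBox_eq_div (a b x y : Fin 2) :
    hardyBox θ a b x y =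
      ‖Real.cos θ * (⟪mvec θ x a, ket0⟫_ℂ * ⟪mvec θ y b, ket1⟫_ℂ) +
        ⟪mvec θ x a, ket1⟫_ℂ * ⟪mvec θ y b, mvec θ 0 1⟫_ℂ‖ ^ 2 / (1 + Real.cos θ ^ 2) := by
  have normalization : ‖((1 / √(1 + Real.cos θ ^ 2) : ℝ) : ℂ)‖ ^ 2 = 1 / (1 + Real.cos θ ^ 2) := by
    rw [Complex.norm_real, Real.norm_eq_abs, sq_abs, div_pow, one_pow, Real.sq_sqrt (by positivity)]
  rw [hardyBox, inner_tens_hardyState, norm_mul, mul_pow, normalization, one_div_mul_eq_div]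

theorem hardyBox_one_zero_one_zero : hardyBox θ 1 0 1 0 = 0 := by
  have inner_ket1_ket0 : ⟪ket1, ket0⟫_ℂ = 0 := inner_eq_zero_symm.1 inner_ket0_ket1
  simp [hardyBox_eq_div, mvec_one_one, inner_ket1_ket0, inner_mvec_zero_mvec_one]

theorem hardyBox_zero_one_zero_one : hardyBox θ 0 1 0 1 = 0 := by
  rw [hardyBox_swap, hardyBox_one_zero_one_zero]

theorem hardyBox_zero_zero_one_one : hardyBox θ 0 0 1 1 = 0 := by
  simp [hardyBox_eq_div, mvec_one_zero, inner_ket0_ket1]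

theorem hardyBox_zero_zero_zero_zero :
    hardyBox θ 0 0 0 0 = Real.sin θ ^ 2 * Real.cos θ ^ 4 / (1 + Real.cos θ ^ 2) := by
  have amplitude : (Real.cos θ * (Real.sin θ * -Real.cos θ) + -Real.cos θ * 0 : ℂ) =
      ((-(Real.sin θ * Real.cos θ ^ 2) : ℝ) : ℂ) := by
    push_cast
    ring
  rw [hardyBox_eq_div, inner_mvec_zero_mvec_one, inner_mvec_zero_zero_ket0,
    inner_mvec_zero_zero_ket1, amplitude, Complex.norm_real, Real.norm_eq_abs, sq_abs]
  ring

theorem hardyBox_zero_zero_zero_zero_pos_iff :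
    0 < hardyBox θ 0 0 0 0 ↔ Real.sin (2 * θ) ≠ 0 := by
  have nonneg : 0 ≤ hardyBox θ 0 0 0 0 := sq_nonneg _
  have denominator_ne_zero : 1 + Real.cos θ ^ 2 ≠ 0 := by positivity
  rw [nonneg.lt_iff_ne', hardyBox_zero_zero_zero_zero, Real.sin_two_mul]
  simp [denominator_ne_zero]

theorem hardyBox_zero_zero_zero_zero_eq_cos_pow (h : (Real.cos θ ^ 2) ^ 2 = 1 - Real.cos θ ^ 2) :
    hardyBox θ 0 0 0 0 = (Real.cos θ ^ 2) ^ 5 := by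
  rw [hardyBox_zero_zero_zero_zero, Real.sin_sq, ← h, div_eq_iff (by positivity)]
  linear_combination -Real.cos θ ^ 8 * h

theorem hardyBox_zero_zero_zero_zero_of_cos_sq (h : Real.cos θ ^ 2 = (√5 - 1) / 2) :
    hardyBox θ 0 0 0 0 = (5 * √5 - 11) / 2 := by
  have quadratic : (Real.cos θ ^ 2) ^ 2 = 1 - Real.cos θ ^ 2 := by
    rw [h, sqrt_five_sub_one_div_two_sq]
  calc
    hardyBox θ 0 0 0 0 = (Real.cos θ ^ 2) ^ 5 := hardyBox_zero_zero_zero_zero_eq_cos_pow θ quadratic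
    _ = 5 * Real.cos θ ^ 2 - 3 := pow_five_of_sq_eq_one_sub quadratic
    _ = (5 * √5 - 11) / 2 := by rw [h]; ring

theorem hardy_box_paradox_general :
    hardyBox θ 0 1 0 1 = 0 ∧
    hardyBox θ 1 0 1 0 = 0 ∧
    hardyBox θ 0 0 1 1 = 0 ∧
    hardyBox θ 0 0 0 0 = Real.sin θ ^ 2 * Real.cos θ ^ 4 / (1 + Real.cos θ ^ 2) ∧
    (0 < hardyBox θ 0 0 0 0 ↔ Real.sin (2 * θ) ≠ 0) ∧
    (Real.cos θ ^ 2 = (√5 - 1) / 2 → hardyBox θ 0 0 0 0 = (5 * √5 - 11) / 2) :=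
  ⟨hardyBox_zero_one_zero_one θ, hardyBox_one_zero_one_zero θ, hardyBox_zero_zero_one_one θ,
    hardyBox_zero_zero_zero_zero θ, hardyBox_zero_zero_zero_zero_pos_iff θ,
    hardyBox_zero_zero_zero_zero_of_cos_sq θ⟩

end

/-- The quantum box obtained from the Hardy state and measurements satisfies the
Hardy zero constraints and has `P(0,0|0,0) = sin²θ·cos⁴θ/(1+cos²θ) > 0`; when
`cos²θ = (√5−1)/2`, one gets `P(0,0|0,0) = (5√5−11)/2`. -/
theorem hardy_box_paradox (θ : ℝ) (hθ0 : 0 < θ) (hθ1 : θ < Real.pi / 2) :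
    hardyBox θ 0 1 0 1 = 0 ∧
    hardyBox θ 1 0 1 0 = 0 ∧
    hardyBox θ 0 0 1 1 = 0 ∧
    hardyBox θ 0 0 0 0 = Real.sin θ ^ 2 * Real.cos θ ^ 4 / (1 + Real.cos θ ^ 2) ∧
    0 < hardyBox θ 0 0 0 0 ∧
    (Real.cos θ ^ 2 = (Real.sqrt 5 - 1) / 2 →
      hardyBox θ 0 0 0 0 = (5 * Real.sqrt 5 - 11) / 2) := by
  obtain ⟨h01, h10, h00, hP, hpos, hgolden⟩ := hardy_box_paradox_general θ
  exact ⟨h01, h10, h00, hP,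
    hpos.2 (Real.sin_pos_of_pos_of_lt_pi (by linarith) (by linarith)).ne', hgolden⟩

end
end

section
/- Every no-signaling (2,2,2) box satisfies p_H ≤ 1/2 + z_H/2. -/
/-!
No-signaling lets the outcome `a` of Alice be carried from the settings `(x, y)` to `(x, y')`, and
then the outcome `b₀` of Bob from `(x, y')` to `(x', y')`. Up to the events `(a, b')` with `b' ≠ b₀`
at `(x, y')`, this bounds `P a b x y` by the marginal of Bob at `b₀` under `(x', y')`. Exchanging
the parties bounds it by the marginal of Alice at `a₀` under the same settings. The probabilities of
these two marginal events sum to at most `1 + P a₀ b₀ x' y'`, as they overlap only in `(a₀, b₀)`.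
-/

/-- The no-signaling conditions on a bipartite box, with `P a b x y` standing for `P(a,b|x,y)`:
the marginal of each party does not depend on the input of the other party. Nonnegativity and
normalization are not included. -/
structure IsNoSignaling {A B X Y M : Type*} [Fintype A] [Fintype B] [AddCommMonoid M]
    (P : A → B → X → Y → M) : Prop where
  sum_right_eq : ∀ a x y y', ∑ b, P a b x y = ∑ b, P a b x y'
  sum_left_eq : ∀ b y x x', ∑ a, P a b x y = ∑ a, P a b x' y

theorem IsNoSignaling.swap {A B X Y M : Type*} [Fintype A] [Fintype B] [AddCommMonoid M]
    {P : A → B → X → Y → M} (hP : IsNoSignaling P) :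
    IsNoSignaling fun b a y x => P a b x y :=
  ⟨hP.sum_left_eq, hP.sum_right_eq⟩

section OrderedAddCommMonoid

variable {A B X Y M : Type*} [Fintype A] [Fintype B]
  [AddCommMonoid M] [PartialOrder M] [IsOrderedAddMonoid M]

theorem sum_row_add_sum_column_le {f : A → B → M} (hf : ∀ a b, 0 ≤ f a b) (a₀ : A) (b₀ : B) :
    ∑ b, f a₀ b + ∑ a, f a b₀ ≤ ∑ a, ∑ b, f a b + f a₀ b₀ := by
  classical
  calc ∑ b, f a₀ b + ∑ a, f a b₀
      = (∑ b, f a₀ b + ∑ a ∈ {a₀}ᶜ, f a b₀) + f a₀ b₀ := by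
        rw [Fintype.sum_eq_add_sum_compl a₀ (f · b₀), add_comm (f a₀ b₀), add_assoc]
    _ ≤ (∑ b, f a₀ b + ∑ a ∈ {a₀}ᶜ, ∑ b, f a b) + f a₀ b₀ := by
        gcongr with a
        exact Finset.single_le_sum (fun b _ => hf a b) (Finset.mem_univ b₀)
    _ = ∑ a, ∑ b, f a b + f a₀ b₀ := by
        rw [Fintype.sum_eq_add_sum_compl a₀ fun a => ∑ b, f a b]

theorem IsNoSignaling.le_sum_compl_add_sum_left [DecidableEq B] {P : A → B → X → Y → M}
    (hP : IsNoSignaling P) (hpos : ∀ a b x y, 0 ≤ P a b x y) (a : A) (b b₀ : B)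
    (x x' : X) (y y' : Y) :
    P a b x y ≤ ∑ b' ∈ {b₀}ᶜ, P a b' x y' + ∑ a', P a' b₀ x' y' :=
  calc P a b x y
      ≤ ∑ b', P a b' x y := Finset.single_le_sum (fun b' _ => hpos a b' x y) (Finset.mem_univ b)
    _ = ∑ b', P a b' x y' := hP.sum_right_eq a x y y'
    _ = ∑ b' ∈ {b₀}ᶜ, P a b' x y' + P a b₀ x y' := by
        rw [Fintype.sum_eq_add_sum_compl b₀, add_comm]
    _ ≤ ∑ b' ∈ {b₀}ᶜ, P a b' x y' + ∑ a', P a' b₀ x y' := by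
        gcongr
        exact Finset.single_le_sum (fun a' _ => hpos a' b₀ x y') (Finset.mem_univ a)
    _ = ∑ b' ∈ {b₀}ᶜ, P a b' x y' + ∑ a', P a' b₀ x' y' := by rw [hP.sum_left_eq b₀ y' x x']

end OrderedAddCommMonoid

theorem noSignaling_hardy_upper_bound_general {A B X Y K : Type*} [Fintype A] [Fintype B]
    [DecidableEq A] [DecidableEq B] [Field K] [LinearOrder K] [IsStrictOrderedRing K]
    {P : A → B → X → Y → K} (hP : IsNoSignaling P) (hpos : ∀ a b x y, 0 ≤ P a b x y)
    (hnorm : ∀ x y, ∑ a, ∑ b, P a b x y = 1) (a a₀ : A) (b b₀ : B) (x x' : X) (y y' : Y) :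
    P a b x y ≤ 1 / 2 + (∑ b' ∈ {b₀}ᶜ, P a b' x y' + ∑ a' ∈ {a₀}ᶜ, P a' b x' y +
      P a₀ b₀ x' y') / 2 := by
  have le_right_marginal := hP.le_sum_compl_add_sum_left hpos a b b₀ x x' y y'
  have le_left_marginal :=
    hP.swap.le_sum_compl_add_sum_left (fun b a y x => hpos a b x y) b a a₀ y y' x x'
  have marginals_le : ∑ b', P a₀ b' x' y' + ∑ a', P a' b₀ x' y' ≤ 1 + P a₀ b₀ x' y' :=
    hnorm x' y' ▸ sum_row_add_sum_column_le (fun a b => hpos a b x' y') a₀ b₀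
  linarith

/-- Every no-signaling (2,2,2) box satisfies `p_H ≤ 1/2 + z_H/2`. -/
theorem noSignaling_hardy_upper_bound (P : Fin 2 → Fin 2 → Fin 2 → Fin 2 → ℝ)
    (hpos : ∀ a b x y, 0 ≤ P a b x y)
    (hnorm : ∀ x y, ∑ a, ∑ b, P a b x y = 1)
    (hnsA : ∀ a x y y', ∑ b, P a b x y = ∑ b, P a b x y')
    (hnsB : ∀ b y x x', ∑ a, P a b x y = ∑ a, P a b x' y) :
    P 0 0 0 0 ≤ 1 / 2 + (P 0 1 0 1 + P 1 0 1 0 + P 0 0 1 1) / 2 := by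
  have compl_zero : ({0}ᶜ : Finset (Fin 2)) = {1} := rfl
  simpa only [compl_zero, Finset.sum_singleton] using
    noSignaling_hardy_upper_bound_general ⟨hnsA, hnsB⟩ hpos hnorm 0 0 0 0 0 1 0 1
end

section
/- Every no-signaling (2,2,2) box satisfies B_H ≤ p_H ≤ 1 − B_H and z_H ≤ 1 − 2·B_H. -/
/-!
By no-signaling, `P(a,b|x,y) ≤ P_A(a|x) ≤ P_B(b'|y') + P(a, ≠ b'|x,y')`, and symmetrically
`P(a,b|x,y) ≤ P_A(a'|x') + P(≠ a', b|x',y)`. Since `P_A(a'|x') + P_B(b'|y') ≤ 1 + P(a',b'|x',y')`,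
adding the two gives `2 p ≤ 1 + z`, to which both nontrivial bounds are equivalent.
-/

variable {α β X Y R : Type*} [Fintype α] [Fintype β] [Ring R] [PartialOrder R]

/-- A bipartite no-signaling box with outcomes in `α`, `β` and settings in `X`, `Y`: the entry
`P a b x y` is the conditional probability `P(a,b|x,y)`, and each party's marginal is independent
of the other party's setting. -/
structure IsNoSignalingBox (P : α → β → X → Y → R) : Prop where
  nonneg : ∀ a b x y, 0 ≤ P a b x y
  sum_eq_one : ∀ x y, ∑ a, ∑ b, P a b x y = 1
  sum_right_eq : ∀ a x y y', ∑ b, P a b x y = ∑ b, P a b x y'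
  sum_left_eq : ∀ b y x x', ∑ a, P a b x y = ∑ a, P a b x' y

/-- The quantity `z_H` of Hardy's test for arbitrary outcomes and settings: the total probability
of the three events that have probability zero in Hardy's paradox. The outcome `1` of the
two-outcome test becomes any outcome other than the designated one, `a'` or `b'`. -/
def hardyError [DecidableEq α] [DecidableEq β] (P : α → β → X → Y → R)
    (a a' : α) (b b' : β) (x x' : X) (y y' : Y) : R :=
  ∑ j ∈ {b'}ᶜ, P a j x y' + ∑ i ∈ {a'}ᶜ, P i b x' y + P a' b' x' y'

/-- The quantity `B_H = p_H - z_H` of Hardy's test. -/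
def hardyValue [DecidableEq α] [DecidableEq β] (P : α → β → X → Y → R)
    (a a' : α) (b b' : β) (x x' : X) (y y' : Y) : R :=
  P a b x y - hardyError P a a' b b' x x' y y'

namespace IsNoSignalingBox

variable {P : α → β → X → Y → R}

theorem swap (hP : IsNoSignalingBox P) : IsNoSignalingBox fun b a y x ↦ P a b x y where
  nonneg b a y x := hP.nonneg a b x y
  sum_eq_one y x := Finset.sum_comm.trans (hP.sum_eq_one x y)
  sum_right_eq := hP.sum_left_eq
  sum_left_eq := hP.sum_right_eq

variable [IsOrderedAddMonoid R]

theorem apply_le_sum_right (hP : IsNoSignalingBox P) (a : α) (b : β) (x : X) (y y' : Y) :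
    P a b x y ≤ ∑ j, P a j x y' := by
  rw [hP.sum_right_eq a x y' y]
  exact Finset.single_le_sum (fun j _ ↦ hP.nonneg a j x y) (Finset.mem_univ b)

theorem apply_le_sum_left (hP : IsNoSignalingBox P) (a : α) (b : β) (x x' : X) (y : Y) :
    P a b x y ≤ ∑ i, P i b x' y :=
  hP.swap.apply_le_sum_right b a y x x'

theorem apply_le_sum_left_add_sum_compl [DecidableEq β] (hP : IsNoSignalingBox P)
    (a : α) (b b' : β) (x x' : X) (y y' : Y) :
    P a b x y ≤ ∑ i, P i b' x' y' + ∑ j ∈ {b'}ᶜ, P a j x y' := calc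
  P a b x y ≤ ∑ j, P a j x y' := hP.apply_le_sum_right a b x y y'
  _ = P a b' x y' + ∑ j ∈ {b'}ᶜ, P a j x y' := Fintype.sum_eq_add_sum_compl b' _
  _ ≤ ∑ i, P i b' x' y' + ∑ j ∈ {b'}ᶜ, P a j x y' := by
    gcongr
    exact hP.apply_le_sum_left a b' x x' y'

theorem apply_le_sum_right_add_sum_compl [DecidableEq α] (hP : IsNoSignalingBox P)
    (a a' : α) (b : β) (x x' : X) (y y' : Y) :
    P a b x y ≤ ∑ j, P a' j x' y' + ∑ i ∈ {a'}ᶜ, P i b x' y :=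
  hP.swap.apply_le_sum_left_add_sum_compl b a a' y y' x x'

theorem sum_right_add_sum_left_le (hP : IsNoSignalingBox P) (a : α) (b : β) (x : X) (y : Y) :
    ∑ j, P a j x y + ∑ i, P i b x y ≤ 1 + P a b x y := by
  classical
  calc
    ∑ j, P a j x y + ∑ i, P i b x y
        = ∑ j, P a j x y + ∑ i ∈ {a}ᶜ, P i b x y + P a b x y := by
      rw [Fintype.sum_eq_add_sum_compl a fun i ↦ P i b x y]
      abel
    _ ≤ ∑ j, P a j x y + ∑ i ∈ {a}ᶜ, ∑ j, P i j x y + P a b x y := by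
      gcongr with i
      exact hP.apply_le_sum_right i b x y y
    _ = 1 + P a b x y := by
      rw [← Fintype.sum_eq_add_sum_compl a fun i ↦ ∑ j, P i j x y, hP.sum_eq_one]

variable [DecidableEq α] [DecidableEq β]

theorem hardyError_nonneg (hP : IsNoSignalingBox P)
    (a a' : α) (b b' : β) (x x' : X) (y y' : Y) :
    0 ≤ hardyError P a a' b b' x x' y y' :=
  add_nonneg
    (add_nonneg (Finset.sum_nonneg fun j _ ↦ hP.nonneg a j x y')
      (Finset.sum_nonneg fun i _ ↦ hP.nonneg i b x' y))
    (hP.nonneg a' b' x' y')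

theorem two_mul_apply_le_one_add_hardyError (hP : IsNoSignalingBox P)
    (a a' : α) (b b' : β) (x x' : X) (y y' : Y) :
    2 * P a b x y ≤ 1 + hardyError P a a' b b' x x' y y' := calc
  2 * P a b x y = P a b x y + P a b x y := two_mul _
  _ ≤ (∑ i, P i b' x' y' + ∑ j ∈ {b'}ᶜ, P a j x y') +
      (∑ j, P a' j x' y' + ∑ i ∈ {a'}ᶜ, P i b x' y) :=
    add_le_add (hP.apply_le_sum_left_add_sum_compl a b b' x x' y y')
      (hP.apply_le_sum_right_add_sum_compl a a' b x x' y y')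
  _ = (∑ j, P a' j x' y' + ∑ i, P i b' x' y') +
      (∑ j ∈ {b'}ᶜ, P a j x y' + ∑ i ∈ {a'}ᶜ, P i b x' y) := by abel
  _ ≤ (1 + P a' b' x' y') + (∑ j ∈ {b'}ᶜ, P a j x y' + ∑ i ∈ {a'}ᶜ, P i b x' y) := by
    grw [hP.sum_right_add_sum_left_le a' b' x' y']
  _ = 1 + hardyError P a a' b b' x x' y y' := by
    rw [hardyError]
    abel

theorem apply_add_hardyValue_le_one (hP : IsNoSignalingBox P)
    (a a' : α) (b b' : β) (x x' : X) (y y' : Y) :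
    P a b x y + hardyValue P a a' b b' x x' y y' ≤ 1 := by
  rw [hardyValue, ← add_sub_assoc, ← two_mul, sub_le_iff_le_add]
  exact hP.two_mul_apply_le_one_add_hardyError a a' b b' x x' y y'

end IsNoSignalingBox

theorem noSignaling_hardy_bounds_general [IsOrderedAddMonoid R] [DecidableEq α] [DecidableEq β]
    {P : α → β → X → Y → R} (hP : IsNoSignalingBox P)
    (a a' : α) (b b' : β) (x x' : X) (y y' : Y) :
    hardyValue P a a' b b' x x' y y' ≤ P a b x y ∧
    P a b x y ≤ 1 - hardyValue P a a' b b' x x' y y' ∧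
    hardyError P a a' b b' x x' y y' ≤ 1 - 2 * hardyValue P a a' b b' x x' y y' := by
  have add_le_one := hP.apply_add_hardyValue_le_one a a' b b' x x' y y'
  refine ⟨sub_le_self _ (hP.hardyError_nonneg a a' b b' x x' y y'),
    le_sub_iff_add_le.mpr add_le_one, ?_⟩
  calc hardyError P a a' b b' x x' y y'
    _ = P a b x y + hardyValue P a a' b b' x x' y y' - 2 * hardyValue P a a' b b' x x' y y' := by
      rw [hardyValue, two_mul]
      abel
    _ ≤ 1 - 2 * hardyValue P a a' b b' x x' y y' := sub_le_sub_right add_le_one _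

/-- Every no-signaling (2,2,2) box satisfies `B_H ≤ p_H ≤ 1 − B_H` and
`z_H ≤ 1 − 2·B_H`, where `p_H = P(0,0|0,0)`,
`z_H = P(0,1|0,1) + P(1,0|1,0) + P(0,0|1,1)` and `B_H = p_H − z_H`. -/
theorem noSignaling_hardy_bounds (P : Fin 2 → Fin 2 → Fin 2 → Fin 2 → ℝ)
    (hpos : ∀ a b x y, 0 ≤ P a b x y)
    (hnorm : ∀ x y, ∑ a, ∑ b, P a b x y = 1)
    (hnsA : ∀ a x y y', ∑ b, P a b x y = ∑ b, P a b x y')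
    (hnsB : ∀ b y x x', ∑ a, P a b x y = ∑ a, P a b x' y) :
    (P 0 0 0 0 - (P 0 1 0 1 + P 1 0 1 0 + P 0 0 1 1)) ≤ P 0 0 0 0 ∧
    P 0 0 0 0 ≤ 1 - (P 0 0 0 0 - (P 0 1 0 1 + P 1 0 1 0 + P 0 0 1 1)) ∧
    P 0 1 0 1 + P 1 0 1 0 + P 0 0 1 1 ≤
      1 - 2 * (P 0 0 0 0 - (P 0 1 0 1 + P 1 0 1 0 + P 0 0 1 1)) := by
  have compl_zero : ({0}ᶜ : Finset (Fin 2)) = {1} := by decide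
  simpa only [hardyValue, hardyError, compl_zero, Finset.sum_singleton] using
    noSignaling_hardy_bounds_general ⟨hpos, hnorm, hnsA, hnsB⟩ 0 0 0 0 0 1 0 1
end

section
/- Let P be a no-signaling box with Alice input set {0,1}, a finite Bob input set Y with |Y| ≥ 2, and finite output sets A for Alice and B for Bob. Suppose there exists a₀ ∈ A such that Alice's marginal on input x = 0 is deterministic, i.e. Σ_b P(a₀, b | 0, y) = 1 for all y ∈ Y. Then P is local. -/
/-- A two-party box: nonnegative entries, normalized for every input pair. -/
def IsBox {A B X Y : Type*} [Fintype A] [Fintype B]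
    (P : A → B → X → Y → ℝ) : Prop :=
  (∀ a b x y, 0 ≤ P a b x y) ∧ ∀ x y, (∑ a, ∑ b, P a b x y) = 1

/-- The no-signaling conditions: each party's marginal is independent of the
other party's input. -/
def NoSignaling {A B X Y : Type*} [Fintype A] [Fintype B]
    (P : A → B → X → Y → ℝ) : Prop :=
  (∀ a x y y', (∑ b, P a b x y) = ∑ b, P a b x y') ∧
  (∀ b y x x', (∑ a, P a b x y) = ∑ a, P a b x' y)

/-- A box is local (classical) if it is a finite convex combination of
deterministic boxes. -/
def IsLocal {A B X Y : Type*} [Fintype A] [Fintype B] [DecidableEq A] [DecidableEq B]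
    (P : A → B → X → Y → ℝ) : Prop :=
  ∃ (Λ : Type) (s : Finset Λ) (q : Λ → ℝ) (f : Λ → X → A) (g : Λ → Y → B),
    (∀ l ∈ s, 0 ≤ q l) ∧ (∑ l ∈ s, q l = 1) ∧
    ∀ a b x y, P a b x y =
      ∑ l ∈ s, q l * (if a = f l x then 1 else 0) * (if b = g l y then 1 else 0)

/-- A box vanishes on a set of (output, output, input, input) quadruples. -/
def VanishesOn {A B X Y : Type*} (P : A → B → X → Y → ℝ)
    (S0 : Finset (A × B × X × Y)) : Prop :=
  ∀ t ∈ S0, P t.1 t.2.1 t.2.2.1 t.2.2.2 = 0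

/-!
For a single input of Alice, each outcome `a` defines measures `b ↦ P(a, b | y)` on `B`, indexed by
`y`, which by no-signaling all have the same mass. Drawing Bob's answers to the various `y`
conditionally independently given `a` couples them. The pair formed by `a` and Bob's tuple
of answers is then a hidden variable. Further inputs with a deterministic outcome can be added to
any local model: on such an input the box is determined by Bob's marginal, which by no-signaling is
the one the model already reproduces.
-/

section Coupling

variable {ι : Type*} [Fintype ι] [DecidableEq ι] {β : ι → Type*} [∀ i, Fintype (β i)]
  [∀ i, DecidableEq (β i)]

theorem sum_prod_filter_apply_eq {R : Type*} [CommSemiring R] (c : ∀ i, β i → R) (i : ι)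
    (hc : ∀ j ≠ i, ∑ b, c j b = 1) (b : β i) :
    ∑ g : ∀ j, β j with g i = b, ∏ j, c j (g j) = c i b := by
  rw [← Fintype.piFinset_univ,
    ← Fintype.piFinset_update_singleton_eq_filter_piFinset_eq _ i (Finset.mem_univ b),
    ← Finset.prod_univ_sum, Fintype.prod_eq_single i]
  · rw [Function.update_self, Finset.sum_singleton]
  · intro j hj
    rw [Function.update_of_ne hj, hc j hj]

theorem exists_coupling {K : Type*} [Field K] [LinearOrder K] [IsStrictOrderedRing K]
    {p : ∀ i, β i → K} (hp : ∀ i b, 0 ≤ p i b) {m : K} (hm : 0 ≤ m)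
    (hpm : ∀ i, ∑ b, p i b = m) :
    ∃ w : (∀ i, β i) → K, (∀ g, 0 ≤ w g) ∧ ∑ g, w g = m ∧
      ∀ i b, ∑ g with g i = b, w g = p i b := by
  obtain rfl | hm := hm.eq_or_lt
  · have hp_zero (i : ι) (b : β i) : p i b = 0 :=
      (Finset.sum_eq_zero_iff_of_nonneg fun b _ ↦ hp i b).mp (hpm i) b (Finset.mem_univ b)
    exact ⟨0, by simp [hp_zero]⟩
  · have hnorm (i : ι) : ∑ b, p i b / m = 1 := by
      rw [← Finset.sum_div, hpm, div_self hm.ne']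
    refine ⟨fun g ↦ m * ∏ i, p i (g i) / m, fun g ↦ ?_, ?_, fun i b ↦ ?_⟩
    · exact mul_nonneg hm.le (Finset.prod_nonneg fun i _ ↦ div_nonneg (hp i _) hm.le)
    · rw [← Finset.mul_sum, ← Fintype.prod_sum fun i b ↦ p i b / m]
      simp only [hnorm, Finset.prod_const_one, mul_one]
    · rw [← Finset.mul_sum, sum_prod_filter_apply_eq (fun i b ↦ p i b / m) i fun j _ ↦ hnorm j,
        mul_div_cancel₀ _ hm.ne']

end Coupling

section Box

variable {A B X Y : Type*} [Fintype A] [Fintype B] {P : A → B → X → Y → ℝ}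

theorem IsBox.eq_zero_of_marginal_eq_one (hbox : IsBox P) {a₀ : A} {x : X} {y : Y}
    (hdet : ∑ b, P a₀ b x y = 1) {a : A} (ha : a ≠ a₀) (b : B) : P a b x y = 0 := by
  have hmarginal_nonneg (a : A) : 0 ≤ ∑ b, P a b x y :=
    Finset.sum_nonneg fun b _ ↦ hbox.1 a b x y
  have hadd : ∑ b, P a b x y + ∑ b, P a₀ b x y ≤ 1 :=
    (Finset.add_le_sum (fun a _ ↦ hmarginal_nonneg a) (Finset.mem_univ a) (Finset.mem_univ a₀)
      ha).trans_eq (hbox.2 x y)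
  have hmarginal : ∑ b, P a b x y = 0 := by linarith [hmarginal_nonneg a]
  exact (Finset.sum_eq_zero_iff_of_nonneg fun b _ ↦ hbox.1 a b x y).mp hmarginal b
    (Finset.mem_univ b)

variable [DecidableEq A]

theorem IsBox.eq_ite_of_marginal_eq_one (hbox : IsBox P) {a₀ : A} {x : X} {y : Y}
    (hdet : ∑ b, P a₀ b x y = 1) (a : A) (b : B) :
    P a b x y = if a = a₀ then ∑ a', P a' b x y else 0 := by
  split_ifs with ha
  · rw [ha, Fintype.sum_eq_single a₀ fun a' ha' ↦ hbox.eq_zero_of_marginal_eq_one hdet ha' b]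
  · exact hbox.eq_zero_of_marginal_eq_one hdet ha b

variable [DecidableEq B]

theorem isLocal_of_fintype {Λ : Type*} [Fintype Λ] (q : Λ → ℝ) (f : Λ → X → A) (g : Λ → Y → B)
    (hq : ∀ l, 0 ≤ q l) (hq_sum : ∑ l, q l = 1)
    (hP : ∀ a b x y, P a b x y = ∑ l with f l x = a ∧ g l y = b, q l) : IsLocal P := by
  let e := (Fintype.equivFin Λ).symm
  refine ⟨Fin (Fintype.card Λ), Finset.univ, q ∘ e, f ∘ e, g ∘ e, fun l _ ↦ hq (e l),
    (e.sum_comp q).trans hq_sum, fun a b x y ↦ ?_⟩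
  calc P a b x y
      = ∑ l, q l * (if a = f l x then 1 else 0) * (if b = g l y then 1 else 0) := by
        simp only [hP, Finset.sum_filter, mul_ite, mul_one, mul_zero, ← ite_and, and_comm,
          eq_comm]
    _ = _ := (e.sum_comp _).symm

theorem isLocal_of_unique [Unique X] [Finite Y] [Nonempty Y] (hbox : IsBox P)
    (hns : NoSignaling P) : IsLocal P := by
  classical
  have := Fintype.ofFinite Y
  obtain ⟨y₀⟩ := ‹Nonempty Y›
  have hcoupling (a : A) := exists_coupling (fun y b ↦ hbox.1 a b default y)
    (Finset.sum_nonneg fun b _ ↦ hbox.1 a b default y₀) fun y ↦ hns.1 a default y y₀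
  choose w hw hw_sum hw_marginal using hcoupling
  refine isLocal_of_fintype (fun l : A × (Y → B) ↦ w l.1 l.2) (fun l _ ↦ l.1) Prod.snd
    (fun l ↦ hw l.1 l.2) ?_ fun a b x y ↦ ?_
  · simp only [Fintype.sum_prod_type, hw_sum, hbox.2]
  · calc P a b x y
        = ∑ g with g y = b, w a g := by rw [hw_marginal, Unique.eq_default x]
      _ = ∑ l : A × (Y → B) with l.1 = a ∧ l.2 y = b, w l.1 l.2 := by
        simp [Finset.sum_filter, Fintype.sum_prod_type, ite_and, Finset.sum_ite_irrel]

theorem isLocal_of_isLocal_restrict (hbox : IsBox P) (hns : NoSignaling P) {S : Set X}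
    (hS : S.Nonempty) (hloc : IsLocal fun a b (x : S) y ↦ P a b x y)
    (hdet : ∀ x ∉ S, ∃ a, ∀ y, ∑ b, P a b x y = 1) : IsLocal P := by
  classical
  obtain ⟨x₀, hx₀⟩ := hS
  obtain ⟨Λ, s, q, f, g, hq, hq_sum, hP⟩ := hloc
  choose a₀ ha₀ using hdet
  have hmarginal (b : B) (x : X) (y : Y) :
      ∑ a, P a b x y = ∑ l ∈ s, q l * (if b = g l y then 1 else 0) := by
    rw [hns.2 b y x x₀]
    simp only [hP _ b ⟨x₀, hx₀⟩ y]
    rw [Finset.sum_comm]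
    simp only [← Finset.sum_mul, ← Finset.mul_sum, Finset.sum_ite_eq', Finset.mem_univ, if_true,
      mul_one]
  refine ⟨Λ, s, q, fun l x ↦ if hx : x ∈ S then f l ⟨x, hx⟩ else a₀ x hx, g, hq, hq_sum,
    fun a b x y ↦ ?_⟩
  by_cases hx : x ∈ S
  · simpa only [hx, dite_true] using hP a b ⟨x, hx⟩ y
  · rw [hbox.eq_ite_of_marginal_eq_one (ha₀ x hx y), hmarginal]
    simp only [hx, dite_false]
    split_ifs <;> simp

theorem noSignaling_deterministic_marginal_local_general [Finite Y] [Nonempty Y]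
    (hbox : IsBox P) (hns : NoSignaling P) (x₁ : X)
    (hdet : ∀ x ≠ x₁, ∃ a, ∀ y, ∑ b, P a b x y = 1) : IsLocal P :=
  isLocal_of_isLocal_restrict hbox hns (Set.singleton_nonempty x₁)
    (isLocal_of_unique ⟨fun a b x ↦ hbox.1 a b x, fun x ↦ hbox.2 x⟩
      ⟨fun a x ↦ hns.1 a x, fun b y x x' ↦ hns.2 b y x x'⟩)
    hdet

end Box

/-- A no-signaling box with binary inputs for Alice in which one of Alice's
inputs gives a deterministic outcome must be local. -/
theorem noSignaling_deterministic_marginal_local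
    {A B Y : Type*} [Fintype A] [Fintype B] [Fintype Y]
    [DecidableEq A] [DecidableEq B]
    (hY : 2 ≤ Fintype.card Y)
    (P : A → B → Fin 2 → Y → ℝ)
    (hbox : IsBox P) (hns : NoSignaling P)
    (a0 : A) (hdet : ∀ y, ∑ b, P a0 b 0 y = 1) :
    IsLocal P := by
  have : Nonempty Y := Fintype.card_pos_iff.mp (two_pos.trans_le hY)
  exact noSignaling_deterministic_marginal_local_general hbox hns 1 fun
    | 0, _ => ⟨a0, hdet⟩
    | 1, h => absurd rfl h
end

section
/- Consider a two-party Bell scenario with Alice input set of size 2, Bob input set of size n ≥ 2, and arbitrary finite output sets. Let (a_H, b_H, x_H, y_H) be a distinguished quadruple and let S_0 be a Hardy frame for it, i.e. a set of quadruples such that every local box vanishing on S_0 satisfies P(a_H,b_H|x_H,y_H) = 0. Then every no-signaling box vanishing on S_0 satisfies P(a_H,b_H|x_H,y_H) ≤ (n−1)/n. Moreover the bound is tight: for every n ≥ 2 there exist such a scenario (with n outputs per party), a Hardy frame S_0, and a no-signaling box vanishing on S_0 with P(a_H,b_H|x_H,y_H) = (n−1)/n. -/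
/-!
A set `S` is a Hardy frame exactly when every deterministic strategy producing the Hardy output
hits `S`. Suppose Alice answers `aH` on `xH` and `a` on her other input `x'`, and call an output of
Bob on `y` allowed if it is compatible with `aH` on `xH`, and equal to `bH` when `y = yH`. If for
every `y` some allowed output avoided `S` against `a`, Bob could choose these outputs and the
strategy would avoid `S`; hence every `a` has some `y` at which it excludes all allowed outputs.
For a no-signaling box, Bob's output on `y` is allowed with probability at least the Hardy
probability `p`, so the outputs `a` assigned to a given `y` have total probability at most `1 - p`.
Summing over the `n` values of `y` gives `1 ≤ n (1 - p)`.

For tightness, on input `1` Alice guesses Bob's input uniformly at random and Bob outputs `w` if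
she is right and `l` if she is wrong; on input `0` Alice's output is equal to Bob's. The Hardy event
is that both output `l` on Alice's input `0`. Its probability is that of a wrong guess, `1 - 1 / n`,
but a deterministic Alice commits to a guess and a deterministic Bob then outputs `w` on that input.
-/

section HardyFrame

variable {A B X Y : Type*} [DecidableEq A] [DecidableEq B]

/-- The deterministic box in which Alice answers by `f` and Bob by `g`. -/
def deterministicBox (f : X → A) (g : Y → B) (a : A) (b : B) (x : X) (y : Y) : ℝ :=
  (if a = f x then 1 else 0) * (if b = g y then 1 else 0)

lemma vanishesOn_deterministicBox_iff {f : X → A} {g : Y → B} {S : Finset (A × B × X × Y)} :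
    VanishesOn (deterministicBox f g) S ↔ ∀ x y, (f x, g y, x, y) ∉ S := by
  refine ⟨fun h x y hmem => by simpa [deterministicBox] using h _ hmem, ?_⟩
  rintro h ⟨a, b, x, y⟩ hmem
  have hne : ¬(b = g y ∧ a = f x) := by
    rintro ⟨rfl, rfl⟩
    exact h x y hmem
  simpa [deterministicBox, ← ite_and] using hne

variable [Fintype A] [Fintype B]

lemma isBox_deterministicBox (f : X → A) (g : Y → B) : IsBox (deterministicBox f g) :=
  ⟨fun a b x y => by unfold deterministicBox; positivity, fun x y => by simp [deterministicBox]⟩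

lemma isLocal_deterministicBox (f : X → A) (g : Y → B) : IsLocal (deterministicBox f g) :=
  ⟨Unit, {()}, fun _ => 1, fun _ => f, fun _ => g, by simp, by simp, by simp [deterministicBox]⟩

/-- `S` is a Hardy frame for `(aH, bH, xH, yH)`: a local box vanishing on `S` vanishes there too. -/
def IsHardyFrame (S : Finset (A × B × X × Y)) (aH : A) (bH : B) (xH : X) (yH : Y) : Prop :=
  ∀ Q : A → B → X → Y → ℝ, IsBox Q → IsLocal Q → VanishesOn Q S → Q aH bH xH yH = 0

theorem isHardyFrame_iff_forall_deterministic {S : Finset (A × B × X × Y)}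
    {aH : A} {bH : B} {xH : X} {yH : Y} :
    IsHardyFrame S aH bH xH yH ↔
      ∀ (f : X → A) (g : Y → B), f xH = aH → g yH = bH → ∃ x y, (f x, g y, x, y) ∈ S := by
  refine ⟨?_, ?_⟩
  · rintro h f g rfl rfl
    by_contra! hS
    simpa [deterministicBox] using h _ (isBox_deterministicBox f g) (isLocal_deterministicBox f g)
      (vanishesOn_deterministicBox_iff.2 hS)
  · rintro h Q - ⟨Λ, s, q, f, g, hq, -, hQ⟩ hV
    rw [hQ]
    refine Finset.sum_eq_zero fun l hl => ?_
    by_cases hout : aH = f l xH ∧ bH = g l yH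
    · obtain ⟨x, y, hmem⟩ := h (f l) (g l) hout.1.symm hout.2.symm
      have hsum := hV _ hmem
      rw [hQ, Finset.sum_eq_zero_iff_of_nonneg fun k hk => by have := hq k hk; positivity] at hsum
      have hql : q l = 0 := by simpa using hsum l hl
      simp [hql]
    · rcases not_and_or.1 hout with ha | hb
      · simp [ha]
      · simp [hb]

end HardyFrame

section UpperBound

variable {A B X Y : Type*} [Fintype A] [Fintype B]

lemma IsBox.sum_add_sum_le_one {P : A → B → X → Y → ℝ} (hP : IsBox P) {x : X} {y : Y}
    {T : Finset A} {C : Finset B} (hzero : ∀ a ∈ T, ∀ b ∈ C, P a b x y = 0) :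
    ∑ a ∈ T, ∑ b, P a b x y + ∑ b ∈ C, ∑ a, P a b x y ≤ 1 := by
  classical
  have hT : ∑ a ∈ T, ∑ b, P a b x y = ∑ b ∈ Cᶜ, ∑ a ∈ T, P a b x y := by
    have hC : ∑ b ∈ C, ∑ a ∈ T, P a b x y = 0 :=
      Finset.sum_eq_zero fun b hb => Finset.sum_eq_zero fun a ha => hzero a ha b hb
    rw [Finset.sum_comm, ← Finset.sum_compl_add_sum C, hC, add_zero]
  calc ∑ a ∈ T, ∑ b, P a b x y + ∑ b ∈ C, ∑ a, P a b x y
      ≤ ∑ b ∈ Cᶜ, ∑ a, P a b x y + ∑ b ∈ C, ∑ a, P a b x y := by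
        rw [hT]
        gcongr with b
        · exact fun a _ _ => hP.1 a b x y
        · exact Finset.subset_univ T
    _ = 1 := by rw [Finset.sum_compl_add_sum, Finset.sum_comm, hP.2 x y]

variable [DecidableEq A] [DecidableEq B]

section HardyOutputs

variable [DecidableEq X] [DecidableEq Y]

/-- Bob's outputs on `y` that are compatible, according to `S`, with Alice's output `aH` on `xH`;
on `yH` itself only the Hardy output `bH` is retained. -/
def hardyOutputs (S : Finset (A × B × X × Y)) (aH : A) (bH : B) (xH : X) (yH y : Y) : Finset B :=
  {b | (aH, b, xH, y) ∉ S ∧ (y = yH → b = bH)}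

lemma IsHardyFrame.exists_forall_mem_hardyOutputs {S : Finset (A × B × X × Y)}
    {aH : A} {bH : B} {xH : X} {yH : Y} (hS : IsHardyFrame S aH bH xH yH)
    {f : X → A} (hf : f xH = aH) :
    ∃ y, ∀ b ∈ hardyOutputs S aH bH xH yH y, ∃ x ≠ xH, (f x, b, x, y) ∈ S := by
  by_contra! h
  choose g hg hgS using h
  simp only [hardyOutputs, Finset.mem_filter_univ] at hg
  obtain ⟨x, y, hmem⟩ :=
    isHardyFrame_iff_forall_deterministic.1 hS f g hf ((hg yH).2 rfl)
  by_cases hx : x = xH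
  · subst hx hf
    exact (hg y).1 hmem
  · exact hgS y x hx hmem

lemma apply_le_sum_hardyOutputs {P : A → B → X → Y → ℝ} (hP : IsBox P) (hN : NoSignaling P)
    {S : Finset (A × B × X × Y)} (hV : VanishesOn P S) (aH : A) (bH : B) (xH x : X) (yH y : Y) :
    P aH bH xH yH ≤ ∑ b ∈ hardyOutputs S aH bH xH yH y, ∑ a, P a b x y := by
  have halice : P aH bH xH yH ≤ ∑ b ∈ hardyOutputs S aH bH xH yH y, P aH b xH y := by
    by_cases hy : y = yH
    · subst hy
      by_cases hmem : (aH, bH, xH, y) ∈ S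
      · have hzero : P aH bH xH y = 0 := hV _ hmem
        exact hzero.trans_le (Finset.sum_nonneg fun b _ => hP.1 aH b xH y)
      · exact Finset.single_le_sum (f := fun b => P aH b xH y)
          (fun b _ => hP.1 aH b xH y) (by simp [hardyOutputs, hmem])
    · calc P aH bH xH yH
          ≤ ∑ b, P aH b xH yH := Finset.single_le_sum (f := fun b => P aH b xH yH)
            (fun b _ => hP.1 aH b xH yH) (Finset.mem_univ bH)
        _ = ∑ b, P aH b xH y := hN.1 aH xH yH y
        _ = ∑ b ∈ hardyOutputs S aH bH xH yH y, P aH b xH y := by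
          refine (Finset.sum_subset (Finset.subset_univ _) fun b _ hb => hV (aH, b, xH, y) ?_).symm
          simpa [hardyOutputs, hy] using hb
  refine halice.trans (Finset.sum_le_sum fun b _ => ?_)
  rw [hN.2 b y x xH]
  exact Finset.single_le_sum (f := fun a => P a b xH y)
    (fun a _ => hP.1 a b xH y) (Finset.mem_univ aH)

end HardyOutputs

theorem IsHardyFrame.apply_le [Fintype Y] {S : Finset (A × B × X × Y)}
    {aH : A} {bH : B} {xH x' : X} {yH : Y} (hX : ∀ x ≠ xH, x = x')
    (hS : IsHardyFrame S aH bH xH yH) {P : A → B → X → Y → ℝ}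
    (hP : IsBox P) (hN : NoSignaling P) (hV : VanishesOn P S) :
    P aH bH xH yH ≤ ((Fintype.card Y : ℝ) - 1) / Fintype.card Y := by
  classical
  let : DecidableEq Y := Classical.decEq Y
  have hblock (a : A) : ∃ y, ∀ b ∈ hardyOutputs S aH bH xH yH y, (a, b, x', y) ∈ S := by
    obtain ⟨y, hy⟩ := hS.exists_forall_mem_hardyOutputs
      (f := Function.update (fun _ => a) xH aH) (by simp)
    refine ⟨y, fun b hb => ?_⟩
    obtain ⟨x, hx, hmem⟩ := hy b hb
    obtain rfl := hX x hx
    simpa [hx] using hmem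
  choose F hF using hblock
  have hfiber (y : Y) : ∑ a with F a = y, ∑ b, P a b x' yH ≤ 1 - P aH bH xH yH := by
    have hsum := hP.sum_add_sum_le_one (x := x') (y := y) (T := {a | F a = y})
      (C := hardyOutputs S aH bH xH yH y) fun a ha b hb => by
        obtain rfl := (Finset.mem_filter_univ _).1 ha
        exact hV _ (hF a b hb)
    simp only [hN.1 _ x' y yH] at hsum
    linarith [apply_le_sum_hardyOutputs hP hN hV aH bH xH x' yH y]
  have hone : 1 ≤ Fintype.card Y * (1 - P aH bH xH yH) :=
    calc 1 = ∑ y, ∑ a with F a = y, ∑ b, P a b x' yH := by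
          rw [Finset.sum_fiberwise, hP.2 x' yH]
      _ ≤ ∑ _y : Y, (1 - P aH bH xH yH) := Finset.sum_le_sum fun y _ => hfiber y
      _ = Fintype.card Y * (1 - P aH bH xH yH) := by simp [mul_sub]
  have : Nonempty Y := ⟨yH⟩
  rw [le_div_iff₀ (by positivity)]
  linarith

end UpperBound

section ReplyBox

variable {A B X Y : Type*} [DecidableEq B]

/-- The box in which Alice's output on `x` has weights `α · x` and Bob's output is the function `r`
of Alice's output and of the two inputs. -/
def replyBox (α : A → X → ℝ) (r : A → X → Y → B) (a : A) (b : B) (x : X) (y : Y) : ℝ :=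
  if b = r a x y then α a x else 0

variable [Fintype A] [Fintype B] {α : A → X → ℝ} {r : A → X → Y → B}

lemma isBox_replyBox (hα : ∀ a x, 0 ≤ α a x) (hsum : ∀ x, ∑ a, α a x = 1) :
    IsBox (replyBox α r) := by
  refine ⟨fun a b x y => ?_, fun x y => by simp [replyBox, hsum]⟩
  unfold replyBox
  split_ifs
  exacts [hα a x, le_rfl]

lemma noSignaling_replyBox (hbob : ∀ b y x x',
      ∑ a, replyBox α r a b x y = ∑ a, replyBox α r a b x' y) :
    NoSignaling (replyBox α r) :=
  ⟨fun a x y y' => by simp [replyBox], hbob⟩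

/-- The quadruples in which Bob's output is not the one prescribed by `r`. -/
def replyFrame [Fintype X] [Fintype Y] (r : A → X → Y → B) : Finset (A × B × X × Y) :=
  {t | t.2.1 ≠ r t.1 t.2.2.1 t.2.2.2}

lemma vanishesOn_replyBox_replyFrame [Fintype X] [Fintype Y] :
    VanishesOn (replyBox α r) (replyFrame r) :=
  fun _ ht => if_neg (by simpa [replyFrame] using ht)

end ReplyBox

section Guessing

variable {Y : Type*} [DecidableEq Y]

/-- Bob's reply in the guessing strategy: he copies Alice's output on input `0`, and on input `1`
outputs `w` if her output is a correct guess of his input and `l` otherwise. -/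
def guessReply (l w a : Y) : Fin 2 → Y → Y
  | 0, _ => a
  | 1, y => if a = y then w else l

variable [Fintype Y]

/-- Alice's output distribution in the guessing strategy: on input `1` a uniformly random guess, on
input `0` the distribution of the reply `w` or `l` to such a guess. -/
noncomputable def guessWeight (l w a : Y) : Fin 2 → ℝ
  | 0 => (if a = w then 1 / (Fintype.card Y : ℝ) else 0) +
      if a = l then ((Fintype.card Y : ℝ) - 1) / Fintype.card Y else 0
  | 1 => 1 / Fintype.card Y

lemma isHardyFrame_replyFrame_guessReply {l w : Y} (hlw : l ≠ w) (yH : Y) :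
    IsHardyFrame (replyFrame (guessReply l w)) l l 0 yH := by
  refine isHardyFrame_iff_forall_deterministic.2 fun f g hf _ => ?_
  by_contra! h
  simp only [replyFrame, Finset.mem_filter_univ, not_not] at h
  have hcopy : g (f 1) = l := by simpa [guessReply, hf] using h 0 (f 1)
  have hwin : g (f 1) = w := by simpa [guessReply] using h 1 (f 1)
  exact hlw (hcopy.symm.trans hwin)

lemma sum_replyBox_guess (l w b : Y) (x : Fin 2) (y : Y) :
    ∑ a, replyBox (guessWeight l w) (guessReply l w) a b x y = guessWeight l w b 0 := by
  match x with
  | 0 => exact (Finset.sum_ite_eq _ b _).trans (if_pos (Finset.mem_univ b))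
  | 1 =>
    have : Nonempty Y := ⟨y⟩
    have hwrong : ∀ a ∈ Finset.univ.erase y,
        replyBox (guessWeight l w) (guessReply l w) a b 1 y =
          if b = l then 1 / (Fintype.card Y : ℝ) else 0 := fun a ha => by
      simp [replyBox, guessReply, guessWeight, Finset.ne_of_mem_erase ha]
    rw [← Finset.add_sum_erase _ _ (Finset.mem_univ y), Finset.sum_congr rfl hwrong]
    simp [replyBox, guessReply, guessWeight, Nat.cast_pred Fintype.card_pos, div_eq_mul_inv]

lemma guessWeight_nonneg (l w a : Y) (x : Fin 2) : 0 ≤ guessWeight l w a x := by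
  have : Nonempty Y := ⟨a⟩
  have hcard : (0 : ℝ) ≤ (Fintype.card Y : ℝ) - 1 := by
    simpa using Nat.one_le_iff_ne_zero.2 Fintype.card_ne_zero
  match x with
  | 0 => unfold guessWeight; positivity
  | 1 => unfold guessWeight; positivity

lemma sum_guessWeight (l w : Y) (x : Fin 2) : ∑ a, guessWeight l w a x = 1 := by
  have : Nonempty Y := ⟨l⟩
  match x with
  | 0 =>
    simp only [guessWeight, Finset.sum_add_distrib, Finset.sum_ite_eq', Finset.mem_univ, if_true]
    field_simp
    ring
  | 1 => simp [guessWeight]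

lemma replyBox_guess_apply {l w : Y} (hlw : l ≠ w) (y : Y) :
    replyBox (guessWeight l w) (guessReply l w) l l 0 y =
      ((Fintype.card Y : ℝ) - 1) / Fintype.card Y := by
  simp [replyBox, guessReply, guessWeight, hlw]

end Guessing

/-- Any no-signaling box compatible with a `2 × n` Hardy frame has Hardy output
probability at most `(n−1)/n`, and this bound is tight. -/
theorem hardy_2xn_noiseless_bound :
    (∀ (A B Y : Type) (_ : Fintype A) (_ : Fintype B) (_ : Fintype Y)
      (_ : DecidableEq A) (_ : DecidableEq B) (n : ℕ), 2 ≤ n →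
      Fintype.card Y = n →
      ∀ (aH : A) (bH : B) (xH : Fin 2) (yH : Y)
        (S0 : Finset (A × B × Fin 2 × Y)),
        (∀ Q : A → B → Fin 2 → Y → ℝ,
          IsBox Q → IsLocal Q → VanishesOn Q S0 → Q aH bH xH yH = 0) →
        ∀ P : A → B → Fin 2 → Y → ℝ,
          IsBox P → NoSignaling P → VanishesOn P S0 →
          P aH bH xH yH ≤ ((n : ℝ) - 1) / n) ∧
    (∀ n : ℕ, 2 ≤ n →
      ∃ (aH bH : Fin n) (xH : Fin 2) (yH : Fin n)
        (S0 : Finset (Fin n × Fin n × Fin 2 × Fin n)),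
        (∀ Q : Fin n → Fin n → Fin 2 → Fin n → ℝ,
          IsBox Q → IsLocal Q → VanishesOn Q S0 → Q aH bH xH yH = 0) ∧
        ∃ P : Fin n → Fin n → Fin 2 → Fin n → ℝ,
          IsBox P ∧ NoSignaling P ∧ VanishesOn P S0 ∧
          P aH bH xH yH = ((n : ℝ) - 1) / n) := by
  refine ⟨?_, fun n hn => ?_⟩
  · rintro A B Y _ _ _ _ _ n - rfl aH bH xH yH S0 hS P hP hN hV
    exact IsHardyFrame.apply_le (x' := xH.rev) (by grind) hS hP hN hV
  · let l : Fin n := ⟨0, by lia⟩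
    let w : Fin n := ⟨1, by lia⟩
    have hlw : l ≠ w := by simp [l, w]
    refine ⟨l, l, 0, l, replyFrame (guessReply l w), isHardyFrame_replyFrame_guessReply hlw l,
      replyBox (guessWeight l w) (guessReply l w), ?_, ?_, vanishesOn_replyBox_replyFrame, ?_⟩
    · exact isBox_replyBox (guessWeight_nonneg l w) (sum_guessWeight l w)
    · exact noSignaling_replyBox fun b y x x' => by simp only [sum_replyBox_guess]
    · simpa using replyBox_guess_apply hlw l
end

section
/- Let 0 ≤ ε < 1/2. Let P(a,b,x,y) be a measurement-dependent local distribution on {0,1}⁴, i.e. P(a,b,x,y) = Σ_λ q(λ)·p(x,y|λ)·p(a|x,λ)·p(b|y,λ) for some finite probability distribution q, conditional distributions p(a|x,λ), p(b|y,λ) on {0,1}, and input distributions p(x,y|λ) on {0,1}² satisfying (1/2−ε)² ≤ p(x,y|λ) ≤ (1/2+ε)² for all x,y,λ. Then (1/2−ε)²·P(0,0,0,0) − (1/2+ε)²·(P(0,1,0,1) + P(1,0,1,0) + P(0,0,1,1)) ≤ 0. -/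
/-!
For a fixed hidden variable the outcomes of the two parties are independent, so all four of them,
`a₀, a₁` for Alice's settings and `b₀, b₁` for Bob's, may be drawn jointly. If `a₀ = b₀ = 0`, then
`b₁ = 1`, or `a₁ = 1`, or `a₁ = b₁ = 0`, and a union bound over these three cases is the inequality
without input probabilities. If those lie in `[ℓ, h]`, multiply this by `ℓ * h`, then replace the
factor `h` on the left and the factors `ℓ` on the right by input probabilities. The resulting
inequality is linear in the distribution, so averaging over hidden variables preserves it.
-/

section HardyParadox

variable {R : Type*} [CommSemiring R] [PartialOrder R] [IsOrderedRing R]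

theorem hardy_paradox_inequality (p₀ p₁ r₀ r₁ : stdSimplex R (Fin 2)) :
    p₀ 0 * r₀ 0 ≤ p₀ 0 * r₁ 1 + p₁ 1 * r₀ 0 + p₁ 0 * r₁ 0 := by
  have mul_mul_le (u v : stdSimplex R (Fin 2)) (i j : Fin 2) {t : R} (ht : t ≤ 1) :
      u i * v j * t ≤ u i * v j :=
    mul_le_of_le_one_right (mul_nonneg (stdSimplex.zero_le u i) (stdSimplex.zero_le v j)) ht
  have mul_le_one (u v : stdSimplex R (Fin 2)) (i j : Fin 2) : u i * v j ≤ 1 :=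
    mul_le_one₀ (stdSimplex.le_one u i) (stdSimplex.zero_le v j) (stdSimplex.le_one v j)
  calc p₀ 0 * r₀ 0 = p₀ 0 * r₀ 0 * (r₁ 0 * (p₁ 0 + p₁ 1) + r₁ 1) := by
        rw [stdSimplex.add_eq_one, mul_one, stdSimplex.add_eq_one, mul_one]
    _ = p₀ 0 * r₁ 1 * r₀ 0 + p₁ 1 * r₀ 0 * (p₀ 0 * r₁ 0) + p₁ 0 * r₁ 0 * (p₀ 0 * r₀ 0) := by ring
    _ ≤ p₀ 0 * r₁ 1 + p₁ 1 * r₀ 0 + p₁ 0 * r₁ 0 :=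
        add_le_add_three (mul_mul_le _ _ _ _ (stdSimplex.le_one r₀ 0))
          (mul_mul_le _ _ _ _ (mul_le_one _ _ _ _)) (mul_mul_le _ _ _ _ (mul_le_one _ _ _ _))

variable {X Y : Type*} {ℓ h : R}

theorem hardy_paradox_inequality_of_mem_Icc (f : X → stdSimplex R (Fin 2))
    (g : Y → stdSimplex R (Fin 2)) {w : X → Y → R} (hℓ : 0 ≤ ℓ)
    (hw : ∀ x y, w x y ∈ Set.Icc ℓ h) (x₀ x₁ : X) (y₀ y₁ : Y) :
    ℓ * (w x₀ y₀ * f x₀ 0 * g y₀ 0) ≤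
      h * (w x₀ y₁ * f x₀ 0 * g y₁ 1 + w x₁ y₀ * f x₁ 1 * g y₀ 0
        + w x₁ y₁ * f x₁ 0 * g y₁ 0) := by
  have hlow x y : ℓ ≤ w x y := (hw x y).1
  have hhigh x y : w x y ≤ h := (hw x y).2
  have hh : 0 ≤ h := hℓ.trans <| (hlow x₀ y₀).trans (hhigh x₀ y₀)
  calc ℓ * (w x₀ y₀ * f x₀ 0 * g y₀ 0) ≤ ℓ * (h * f x₀ 0 * g y₀ 0) := by
        gcongr <;> simp [hhigh]
    _ = ℓ * h * (f x₀ 0 * g y₀ 0) := by ring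
    _ ≤ ℓ * h * (f x₀ 0 * g y₁ 1 + f x₁ 1 * g y₀ 0 + f x₁ 0 * g y₁ 0) := by
        gcongr
        exact hardy_paradox_inequality (f x₀) (f x₁) (g y₀) (g y₁)
    _ = h * (ℓ * f x₀ 0 * g y₁ 1 + ℓ * f x₁ 1 * g y₀ 0 + ℓ * f x₁ 0 * g y₁ 0) := by ring
    _ ≤ h * (w x₀ y₁ * f x₀ 0 * g y₁ 1 + w x₁ y₀ * f x₁ 1 * g y₀ 0
        + w x₁ y₁ * f x₁ 0 * g y₁ 0) := by
        gcongr <;> simp [hlow]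

theorem mdl_inequality_general {Λ : Type*} {s : Finset Λ} {q : Λ → R} {pin : Λ → X → Y → R}
    {pa : Λ → Fin 2 → X → R} {pb : Λ → Fin 2 → Y → R} {P : Fin 2 → Fin 2 → X → Y → R}
    (hℓ : 0 ≤ ℓ) (hq : ∀ l ∈ s, 0 ≤ q l) (hpin : ∀ l ∈ s, ∀ x y, pin l x y ∈ Set.Icc ℓ h)
    (hpa : ∀ l ∈ s, ∀ x, (pa l · x) ∈ stdSimplex R (Fin 2))
    (hpb : ∀ l ∈ s, ∀ y, (pb l · y) ∈ stdSimplex R (Fin 2))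
    (hP : ∀ a b x y, P a b x y = ∑ l ∈ s, q l * pin l x y * pa l a x * pb l b y)
    (x₀ x₁ : X) (y₀ y₁ : Y) :
    ℓ * P 0 0 x₀ y₀ ≤ h * (P 0 1 x₀ y₁ + P 1 0 x₁ y₀ + P 0 0 x₁ y₁) := by
  simp only [hP, ← Finset.sum_add_distrib, Finset.mul_sum]
  refine Finset.sum_le_sum fun l hl ↦ ?_
  have hardy : ℓ * (pin l x₀ y₀ * pa l 0 x₀ * pb l 0 y₀) ≤
      h * (pin l x₀ y₁ * pa l 0 x₀ * pb l 1 y₁ + pin l x₁ y₀ * pa l 1 x₁ * pb l 0 y₀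
        + pin l x₁ y₁ * pa l 0 x₁ * pb l 0 y₁) :=
    hardy_paradox_inequality_of_mem_Icc (fun x ↦ ⟨_, hpa l hl x⟩) (fun y ↦ ⟨_, hpb l hl y⟩)
      hℓ (hpin l hl) x₀ x₁ y₀ y₁
  convert mul_le_mul_of_nonneg_left hardy (hq l hl) using 1 <;> ring

end HardyParadox

/-- Every measurement-dependent local distribution, with input distributions
satisfying the SV bounds `(1/2−ε)² ≤ p(x,y|λ) ≤ (1/2+ε)²`, satisfies the MDL
inequality from the Hardy paradox. -/
theorem mdl_inequality (ε : ℝ) (hε0 : 0 ≤ ε) (hε1 : ε < 1 / 2)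
    (P : Fin 2 → Fin 2 → Fin 2 → Fin 2 → ℝ)
    (Λ : Type) (s : Finset Λ) (q : Λ → ℝ)
    (pin : Λ → Fin 2 → Fin 2 → ℝ)
    (pa : Λ → Fin 2 → Fin 2 → ℝ) (pb : Λ → Fin 2 → Fin 2 → ℝ)
    (hq0 : ∀ l ∈ s, 0 ≤ q l) (hq1 : ∑ l ∈ s, q l = 1)
    (hpin0 : ∀ l ∈ s, ∀ x y, 0 ≤ pin l x y)
    (hpin1 : ∀ l ∈ s, ∑ x, ∑ y, pin l x y = 1)
    (hpinlow : ∀ l ∈ s, ∀ x y, (1 / 2 - ε) ^ 2 ≤ pin l x y)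
    (hpinhigh : ∀ l ∈ s, ∀ x y, pin l x y ≤ (1 / 2 + ε) ^ 2)
    (hpa0 : ∀ l ∈ s, ∀ a x, 0 ≤ pa l a x) (hpa1 : ∀ l ∈ s, ∀ x, ∑ a, pa l a x = 1)
    (hpb0 : ∀ l ∈ s, ∀ b y, 0 ≤ pb l b y) (hpb1 : ∀ l ∈ s, ∀ y, ∑ b, pb l b y = 1)
    (hP : ∀ a b x y, P a b x y = ∑ l ∈ s, q l * pin l x y * pa l a x * pb l b y) :
    (1 / 2 - ε) ^ 2 * P 0 0 0 0 -
        (1 / 2 + ε) ^ 2 * (P 0 1 0 1 + P 1 0 1 0 + P 0 0 1 1) ≤ 0 :=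
  sub_nonpos.2 <| mdl_inequality_general (sq_nonneg _) hq0
    (fun l hl x y ↦ ⟨hpinlow l hl x y, hpinhigh l hl x y⟩)
    (fun l hl x ↦ ⟨(hpa0 l hl · x), hpa1 l hl x⟩) (fun l hl y ↦ ⟨(hpb0 l hl · y), hpb1 l hl y⟩)
    hP 0 1 0 1
end
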